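/- Let α ∈ (0,1), let n ≥ 1 be an integer, and let a : ℂ × ℂⁿ → ℂⁿ be continuously differentiable (in the real sense) and such that on every bounded subset of ℂ × ℂⁿ its first-order partial derivatives have finite α-Hölder constant. Then for every vector c ∈ ℂⁿ there exist R > 0 and a map u : ℂ → ℂⁿ which is continuously differentiable on a neighborhood of the closed disk D = {z ∈ ℂ : |z| ≤ R}, whose first-order Wirtinger derivatives ∂u and ∂̄u have finite α-Hölder constant on D, such that ∂̄u(z) = a(z, u(z)) for all z ∈ D and u(0) = c. -/

import Mathlib

open Complex MeasureTheory Metric ENNReal NNReal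

noncomputable section

/-- Wirtinger derivative `∂` for vector-valued maps (componentwise for `E = Fin n → ℂ`). -/
def wDv {E : Type*} [NormedAddCommGroup E] [NormedSpace ℂ E] (f : ℂ → E) : ℂ → E := fun z =>
  (2 : ℂ)⁻¹ • (fderiv ℝ f z 1 - Complex.I • fderiv ℝ f z Complex.I)

/-- Wirtinger derivative `∂̄` for vector-valued maps. -/
def wDbarv {E : Type*} [NormedAddCommGroup E] [NormedSpace ℂ E] (f : ℂ → E) : ℂ → E := fun z =>
  (2 : ℂ)⁻¹ • (fderiv ℝ f z 1 + Complex.I • fderiv ℝ f z Complex.I)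

/-- α-Hölder constant of `f` on `A`, valued in `ℝ≥0∞`. -/
def HolV {E : Type*} [NormedAddCommGroup E] (α : ℝ) (A : Set ℂ) (f : ℂ → E) : ℝ≥0∞ :=
  ⨆ z ∈ A, ⨆ z' ∈ A, ⨆ _ : z ≠ z', (‖f z - f z'‖₊ : ℝ≥0∞) / (‖z - z'‖₊ : ℝ≥0∞) ^ α

end

/-!
The Cauchy transform `T`, convolution with `1 / (π w)`, inverts `∂̄` on compactly supported
Lipschitz functions. It commutes with differentiation, and it maps bounded functions supported in a
fixed disk to `α`-Hölder functions for every `α < 1`, because `|z - w|⁻¹` is locally integrable with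
room to spare; hence `T f` is `C^{1,α}` as soon as `f` is Lipschitz. Cutting the right-hand side off
to a disk of radius `ρ`, a fixed point of `u ↦ c + (T s) - (T s) 0` with `s w = χ w • a (w, u w)`
solves the equation where `χ = 1`. Since `T` has sup norm `O(ρ)` on functions supported in that
disk, for small `ρ` this map preserves a set of uniformly Lipschitz functions and contracts the sup
distance there, so it has a Lipschitz fixed point. Its source `s` is then Lipschitz, which gives the
Hölder regularity of the derivatives.
-/

section KernelIntegrals

variable {V : Type*} [NormedAddCommGroup V] [NormedSpace ℝ V] [FiniteDimensional ℝ V]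
  [Nontrivial V] [MeasurableSpace V] [BorelSpace V] {μ : Measure V} [μ.IsAddHaarMeasure]
  {β ρ : ℝ}

lemma locallyIntegrable_norm_rpow_neg (hβ : β < Module.finrank ℝ V) :
    LocallyIntegrable (fun x : V ↦ ‖x‖ ^ (-β)) μ :=
  locallyIntegrable_of_norm_le_rpow (C := 1) Module.finrank_pos hβ
    (.of_forall fun x ↦ by simp [abs_of_nonneg (Real.rpow_nonneg (norm_nonneg x) _)])
    (measurable_norm.pow_const _).aestronglyMeasurable

lemma integrableOn_norm_sub_rpow_neg_closedBall (hβ : β < Module.finrank ℝ V) (x y : V) :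
    IntegrableOn (fun w ↦ ‖y - w‖ ^ (-β)) (closedBall x ρ) μ := by
  have h_ball : (fun w ↦ y - w) ⁻¹' closedBall (y - x) ρ = closedBall x ρ := by
    ext w
    simp [dist_eq_norm, norm_sub_rev]
  rw [← h_ball]
  exact ((μ.measurePreserving_sub_left y).integrableOn_comp_preimage
    (Homeomorph.subLeft y).measurableEmbedding).2
    ((locallyIntegrable_norm_rpow_neg hβ).integrableOn_isCompact (isCompact_closedBall _ _))

lemma setIntegral_norm_rpow_neg_closedBall (hβ : β < Module.finrank ℝ V) (hρ : 0 ≤ ρ) :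
    ∫ x in closedBall (0 : V) ρ, ‖x‖ ^ (-β) ∂μ =
      Module.finrank ℝ V / (Module.finrank ℝ V - β) * μ.real (ball 0 1) *
        ρ ^ (Module.finrank ℝ V - β) := by
  set d := Module.finrank ℝ V
  have hd_pos : 0 < d := Module.finrank_pos
  have h_radial : ∀ r ∈ Set.Ioi (0 : ℝ), r ^ (d - 1) • (Set.Iic ρ).indicator (· ^ (-β)) r =
      (Set.Iic ρ).indicator (· ^ (d - β - 1)) r := by
    intro r hr
    by_cases hrρ : r ∈ Set.Iic ρ
    · have : (d : ℝ) - β - 1 = (d - 1 : ℕ) + -β := by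
        rw [Nat.cast_sub hd_pos]; push_cast; ring
      simp [hrρ, this, Real.rpow_add hr, -Nat.cast_pred]
    · simp [hrρ]
  calc ∫ x in closedBall (0 : V) ρ, ‖x‖ ^ (-β) ∂μ
      = ∫ x : V, (Set.Iic ρ).indicator (· ^ (-β)) ‖x‖ ∂μ := by
        classical
        rw [← integral_indicator measurableSet_closedBall]
        simp only [Set.indicator_apply, mem_closedBall_zero_iff, Set.mem_Iic]
    _ = d • μ.real (ball 0 1) • ∫ r in Set.Ioi 0, (Set.Iic ρ).indicator (· ^ (d - β - 1)) r := by
        rw [integral_fun_norm_addHaar μ, setIntegral_congr_fun measurableSet_Ioi h_radial]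
    _ = d • μ.real (ball 0 1) • (ρ ^ (d - β) / (d - β)) := by
        rw [setIntegral_indicator measurableSet_Iic, Set.Ioi_inter_Iic,
          ← intervalIntegral.integral_of_le hρ, integral_rpow (.inl (by linarith)),
          sub_add_cancel, Real.zero_rpow (sub_pos.2 hβ).ne', sub_zero]
    _ = _ := by simp only [nsmul_eq_mul, smul_eq_mul]; ring

lemma setIntegral_norm_sub_rpow_neg_closedBall_le (hβ₀ : 0 ≤ β) (hβ : β < Module.finrank ℝ V)
    (hρ : 0 < ρ) (x y : V) :
    ∫ w in closedBall x ρ, ‖y - w‖ ^ (-β) ∂μ ≤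
      (Module.finrank ℝ V / (Module.finrank ℝ V - β) + 1) * μ.real (ball 0 1) *
        ρ ^ (Module.finrank ℝ V - β) := by
  set d := Module.finrank ℝ V
  set g : V → ℝ := (closedBall 0 ρ).indicator fun x ↦ ‖x‖ ^ (-β) with hg
  have hg_nonneg : ∀ x, 0 ≤ g x := Set.indicator_nonneg fun _ _ ↦ by positivity
  have hg_int : Integrable (fun w ↦ g (y - w)) μ :=
    (((locallyIntegrable_norm_rpow_neg hβ).integrableOn_isCompact
      (isCompact_closedBall 0 ρ)).integrable_indicator measurableSet_closedBall).comp_sub_left y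
  have h_le : ∀ x, ‖x‖ ^ (-β) ≤ g x + ρ ^ (-β) := by
    intro x
    by_cases hx : x ∈ closedBall 0 ρ
    · simp only [hg, Set.indicator_of_mem hx]
      linarith [Real.rpow_nonneg hρ.le (-β)]
    · rw [hg, Set.indicator_of_notMem hx, zero_add]
      rw [mem_closedBall_zero_iff, not_le] at hx
      exact Real.rpow_le_rpow_of_nonpos hρ hx.le (neg_nonpos.2 hβ₀)
  have h_const : ρ ^ (-β) * μ.real (closedBall x ρ) = μ.real (ball 0 1) * ρ ^ (d - β) := by
    rw [Measure.addHaar_real_closedBall _ _ hρ.le, sub_eq_add_neg, Real.rpow_add hρ,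
      Real.rpow_natCast]
    ring
  have h_const_int : IntegrableOn (fun _ ↦ ρ ^ (-β)) (closedBall x ρ) μ :=
    integrableOn_const measure_closedBall_lt_top.ne
  calc ∫ w in closedBall x ρ, ‖y - w‖ ^ (-β) ∂μ
      ≤ ∫ w in closedBall x ρ, (g (y - w) + ρ ^ (-β)) ∂μ :=
        integral_mono_of_nonneg (.of_forall fun w ↦ by positivity)
          (hg_int.integrableOn.add h_const_int) (.of_forall fun w ↦ h_le _)
    _ = ∫ w in closedBall x ρ, g (y - w) ∂μ + ρ ^ (-β) * μ.real (closedBall x ρ) := by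
        rw [integral_add hg_int.integrableOn h_const_int]
        simp [mul_comm]
    _ ≤ ∫ w, g (y - w) ∂μ + μ.real (ball 0 1) * ρ ^ (d - β) := by
        rw [h_const]
        exact add_le_add_left
          (setIntegral_le_integral hg_int (.of_forall fun w ↦ hg_nonneg _)) _
    _ = _ := by
        rw [integral_sub_left_eq_self g μ y, hg, integral_indicator measurableSet_closedBall,
          setIntegral_norm_rpow_neg_closedBall hβ hρ.le]
        ring

end KernelIntegrals

lemma norm_inv_sub_inv_le {𝕜 : Type*} [NormedField 𝕜] {a b : 𝕜} (ha : a ≠ 0) (hb : b ≠ 0)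
    {α : ℝ} (hα₀ : 0 ≤ α) (hα₁ : α ≤ 1) :
    ‖a⁻¹ - b⁻¹‖ ≤ ‖a - b‖ ^ α * (‖a‖ ^ (-(1 + α)) + ‖b‖ ^ (-(1 + α))) := by
  have hx : 0 < ‖a‖ := norm_pos_iff.2 ha
  have hy : 0 < ‖b‖ := norm_pos_iff.2 hb
  have h_split : ‖a - b‖ ≤ ‖a - b‖ ^ α * (‖a‖ ^ (1 - α) + ‖b‖ ^ (1 - α)) :=
    calc ‖a - b‖ = ‖a - b‖ ^ α * ‖a - b‖ ^ (1 - α) := by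
          rw [← Real.rpow_add_of_nonneg (norm_nonneg _) hα₀ (sub_nonneg.2 hα₁),
            add_sub_cancel, Real.rpow_one]
      _ ≤ ‖a - b‖ ^ α * (‖a‖ + ‖b‖) ^ (1 - α) := by
          gcongr
          exact norm_sub_le a b
      _ ≤ _ := by
          gcongr
          exact Real.rpow_add_le_add_rpow hx.le hy.le (sub_nonneg.2 hα₁) (by linarith)
  have h_rearr : (‖a‖ ^ (1 - α) + ‖b‖ ^ (1 - α)) * (‖a‖⁻¹ * ‖b‖⁻¹) ≤
      ‖a‖ ^ (-(1 + α)) + ‖b‖ ^ (-(1 + α)) := by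
    have h_order : 0 ≤ (‖a‖⁻¹ ^ α - ‖b‖⁻¹ ^ α) * (‖a‖⁻¹ - ‖b‖⁻¹) := by
      rcases le_total ‖a‖⁻¹ ‖b‖⁻¹ with h | h
      · exact mul_nonneg_of_nonpos_of_nonpos
          (sub_nonpos.2 (by gcongr)) (sub_nonpos.2 h)
      · exact mul_nonneg (sub_nonneg.2 (by gcongr)) (sub_nonneg.2 h)
    have h_pow : ∀ x : ℝ, 0 < x → x ^ (1 - α) = x * x⁻¹ ^ α ∧ x ^ (-(1 + α)) = x⁻¹ * x⁻¹ ^ α := by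
      intro x hx
      rw [Real.inv_rpow hx.le, ← Real.rpow_neg hx.le, neg_add, Real.rpow_add hx, sub_eq_add_neg,
        Real.rpow_add hx, Real.rpow_one, Real.rpow_neg_one]
      exact ⟨rfl, rfl⟩
    rw [(h_pow _ hx).1, (h_pow _ hy).1, (h_pow _ hx).2, (h_pow _ hy).2]
    calc _ = ‖a‖⁻¹ ^ α * ‖b‖⁻¹ + ‖b‖⁻¹ ^ α * ‖a‖⁻¹ := by field_simp
      _ ≤ _ := by linarith
  calc ‖a⁻¹ - b⁻¹‖ = ‖a - b‖ * (‖a‖⁻¹ * ‖b‖⁻¹) := by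
        rw [inv_sub_inv ha hb, norm_div, norm_mul, norm_sub_rev, div_eq_mul_inv, mul_inv]
    _ ≤ ‖a - b‖ ^ α * (‖a‖ ^ (1 - α) + ‖b‖ ^ (1 - α)) * (‖a‖⁻¹ * ‖b‖⁻¹) := by gcongr
    _ ≤ _ := by rw [mul_assoc]; gcongr

section Convolution

open scoped Convolution Pointwise

variable {V F₁ F₂ F₃ F₂' F₃' : Type*} [NormedAddCommGroup V] [MeasurableSpace V] {μ : Measure V}
  [NormedAddCommGroup F₁] [NormedSpace ℝ F₁] [NormedAddCommGroup F₂] [NormedSpace ℝ F₂]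
  [NormedAddCommGroup F₃] [NormedSpace ℝ F₃] [NormedAddCommGroup F₂'] [NormedSpace ℝ F₂']
  [NormedAddCommGroup F₃'] [NormedSpace ℝ F₃'] {k : V → F₁} {f : V → F₂}

lemma map_convolution [CompleteSpace F₃] [CompleteSpace F₃'] {L : F₁ →L[ℝ] F₂ →L[ℝ] F₃}
    {L' : F₁ →L[ℝ] F₂' →L[ℝ] F₃'} (A : F₂ →L[ℝ] F₂') (B : F₃ →L[ℝ] F₃')
    (hAB : ∀ x y, B (L x y) = L' x (A y)) (h : ConvolutionExists k f L μ) (x : V) :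
    B ((k ⋆[L, μ] f) x) = (k ⋆[L', μ] fun y ↦ A (f y)) x := by
  simp only [convolution_def, ← B.integral_comp_comm (h x), hAB]

variable [NormedSpace ℝ V] [FiniteDimensional ℝ V] [BorelSpace V] [μ.IsAddHaarMeasure]

lemma convolutionExists_of_forall_norm_le (L : F₁ →L[ℝ] F₂ →L[ℝ] F₃)
    (hk : LocallyIntegrable k μ) (hf : AEStronglyMeasurable f μ) (hfc : HasCompactSupport f)
    {M : ℝ} (hM : ∀ x, ‖f x‖ ≤ M) :
    ConvolutionExists k f L μ := by
  intro x
  have h_compact : IsCompact ((fun t ↦ x - t) ⁻¹' tsupport f) :=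
    (Homeomorph.subLeft x).isCompact_preimage.2 hfc
  refine BddAbove.convolutionExistsAt L (s := (fun t ↦ x - t) ⁻¹' tsupport f)
    ⟨M, Set.forall_mem_image.2 fun y _ ↦ hM y⟩ h_compact.measurableSet (fun t ht ↦ ?_)
    (hk.integrableOn_isCompact h_compact) hf
  refine subset_tsupport f fun h ↦ ht ?_
  simp [h]

lemma hasFDerivAt_convolution_right_of_lipschitzWith [FiniteDimensional ℝ F₂]
    (L : F₁ →L[ℝ] F₂ →L[ℝ] F₃) (hk : LocallyIntegrable k μ) {C : ℝ≥0} (hf : LipschitzWith C f)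
    (hfc : HasCompactSupport f) (x : V) :
    HasFDerivAt (k ⋆[L, μ] f) ((k ⋆[L.precompR V, μ] fderiv ℝ f) x) x := by
  have h_exists : ConvolutionExists k f L μ := hfc.convolutionExists_right L hk hf.continuous
  have h_meas : Measurable (fderiv ℝ f) := measurable_fderiv ℝ f
  set S := closedBall x 1 - tsupport f
  have hS : IsCompact S := by
    simpa only [S, sub_eq_add_neg] using (isCompact_closedBall x 1).add (IsCompact.neg hfc)
  have h_zero : ∀ y ∈ closedBall x 1, ∀ t ∉ S, f (y - t) = 0 := fun y hy t ht ↦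
    image_eq_zero_of_notMem_tsupport fun h ↦ ht ⟨y, hy, y - t, h, sub_sub_cancel y t⟩
  have h_ae_diff : ∀ᵐ t ∂μ, DifferentiableAt ℝ f (x - t) :=
    (μ.measurePreserving_sub_left x).quasiMeasurePreserving.ae hf.ae_differentiableAt
  refine (hasFDerivAt_integral_of_dominated_loc_of_lip
    (F := fun y t ↦ L (k t) (f (y - t))) (F' := fun t ↦ L.precompR V (k t) (fderiv ℝ f (x - t)))
    (bound := S.indicator fun t ↦ ‖L‖ * ‖k t‖ * C) (closedBall_mem_nhds x one_pos)
    (.of_forall fun y ↦ (h_exists y).aestronglyMeasurable) (h_exists x) ?_ ?_ ?_ ?_).2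
  · exact hk.aestronglyMeasurable.convolution_integrand_snd _ h_meas.aestronglyMeasurable x
  · refine .of_forall fun t ↦ LipschitzOnWith.of_dist_le_mul fun y hy y' hy' ↦ ?_
    by_cases ht : t ∈ S
    · rw [dist_eq_norm, ← map_sub, Set.indicator_of_mem ht, Real.coe_nnabs,
        abs_of_nonneg (by positivity), mul_assoc _ (C : ℝ)]
      refine L.le_of_opNorm₂_le_of_le le_rfl le_rfl ?_
      simpa [dist_eq_norm] using hf.dist_le_mul (y - t) (y' - t)
    · simp [ht, h_zero y hy t ht, h_zero y' hy' t ht]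
  · exact (integrable_indicator_iff hS.measurableSet).2
      (((hk.integrableOn_isCompact hS).norm.const_mul _).mul_const _)
  · filter_upwards [h_ae_diff] with t ht
    exact (L (k t)).hasFDerivAt.comp x (ht.hasFDerivAt.comp x ((hasFDerivAt_id x).sub_const t))

lemma fderiv_convolution_right_of_lipschitzWith [FiniteDimensional ℝ F₂]
    (L : F₁ →L[ℝ] F₂ →L[ℝ] F₃) (hk : LocallyIntegrable k μ) {C : ℝ≥0} (hf : LipschitzWith C f)
    (hfc : HasCompactSupport f) :
    fderiv ℝ (k ⋆[L, μ] f) = k ⋆[L.precompR V, μ] fderiv ℝ f :=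
  funext fun x ↦ (hasFDerivAt_convolution_right_of_lipschitzWith L hk hf hfc x).fderiv

lemma norm_convolution_normed_le_indicator [CompleteSpace F₂] (φ : ContDiffBump (0 : V)) {R M : ℝ}
    (hf : AEStronglyMeasurable f μ) (hfR : Function.support f ⊆ closedBall 0 R)
    (hM : ∀ x, ‖f x‖ ≤ M) (x : V) :
    ‖(φ.normed μ ⋆[ContinuousLinearMap.lsmul ℝ ℝ, μ] f) x‖ ≤
      (closedBall 0 (φ.rOut + R)).indicator (fun _ ↦ M) x := by
  refine Set.le_indicator_apply (fun _ ↦ ?_) fun hx ↦ ?_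
  · simpa using dist_convolution_le (z₀ := (0 : F₂)) (x₀ := x) ((norm_nonneg _).trans (hM 0))
      φ.support_normed_eq.subset φ.nonneg_normed φ.integral_normed hf fun y _ ↦ by simpa using hM y
  · have h_support := Function.support_subset_iff'.1
      (support_convolution_subset (ContinuousLinearMap.lsmul ℝ ℝ) (f := φ.normed μ) (g := f)
        (μ := μ)) x
    rw [h_support, norm_zero]
    rintro ⟨y, hy, w, hw, rfl⟩
    rw [φ.support_normed_eq, mem_ball_zero_iff] at hy
    have := mem_closedBall_zero_iff.1 (hfR hw)
    exact hx (mem_closedBall_zero_iff.2 ((norm_add_le y w).trans (by linarith)))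

end Convolution

section CauchyTransform

open ContinuousLinearMap (lsmul)
open scoped Convolution

variable {E : Type*} [NormedAddCommGroup E] [NormedSpace ℂ E] {f : ℂ → E} {ρ M : ℝ}

/-- The fundamental solution `1 / (π w)` of `∂̄` on the plane. -/
noncomputable def cauchyKernel (w : ℂ) : ℂ := ((Real.pi : ℂ) * w)⁻¹

/-- The Cauchy transform, i.e. the solution `z ↦ π⁻¹ ∫ f w / (z - w)` of `∂̄ u = f`. -/
noncomputable def cauchyTransform (f : ℂ → E) : ℂ → E :=
  cauchyKernel ⋆[lsmul ℝ ℂ, volume] f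

lemma norm_cauchyKernel (w : ℂ) : ‖cauchyKernel w‖ = Real.pi⁻¹ * ‖w‖ ^ (-1 : ℝ) := by
  simp [cauchyKernel, abs_of_pos Real.pi_pos, Real.rpow_neg_one, mul_comm]

lemma norm_cauchyKernel_sub_le {a b : ℂ} (ha : a ≠ 0) (hb : b ≠ 0) {α : ℝ} (hα₀ : 0 ≤ α)
    (hα₁ : α ≤ 1) :
    ‖cauchyKernel a - cauchyKernel b‖ ≤
      Real.pi⁻¹ * (‖a - b‖ ^ α * (‖a‖ ^ (-(1 + α)) + ‖b‖ ^ (-(1 + α)))) := by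
  rw [cauchyKernel, cauchyKernel, mul_inv, mul_inv, ← mul_sub, norm_mul, norm_inv, norm_real,
    Real.norm_of_nonneg Real.pi_pos.le]
  gcongr
  exact norm_inv_sub_inv_le ha hb hα₀ hα₁

lemma measurable_cauchyKernel : Measurable cauchyKernel :=
  (measurable_id.const_mul _).inv

lemma locallyIntegrable_cauchyKernel : LocallyIntegrable cauchyKernel :=
  locallyIntegrable_of_norm_le_rpow (α := 1) Module.finrank_pos (by simp)
    (.of_forall fun w ↦ (norm_cauchyKernel w).le) measurable_cauchyKernel.aestronglyMeasurable

lemma cauchyTransform_apply (f : ℂ → E) (z : ℂ) :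
    cauchyTransform f z = ∫ w, cauchyKernel (z - w) • f w :=
  convolution_eq_swap _

lemma integrable_cauchyKernel_smul (hf : AEStronglyMeasurable f) (hfc : HasCompactSupport f)
    (hM : ∀ w, ‖f w‖ ≤ M) (z : ℂ) : Integrable fun w ↦ cauchyKernel (z - w) • f w :=
  (convolutionExists_of_forall_norm_le (lsmul ℝ ℂ) locallyIntegrable_cauchyKernel hf hfc hM
    z).integrable_swap

lemma setIntegral_norm_sub_rpow_neg_closedBall_le_complex {β : ℝ} (hβ₀ : 0 ≤ β) (hβ : β < 2)
    (hρ : 0 < ρ) (z : ℂ) :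
    ∫ w in closedBall (0 : ℂ) ρ, ‖z - w‖ ^ (-β) ≤
      (2 / (2 - β) + 1) * Real.pi * ρ ^ (2 - β) := by
  have := setIntegral_norm_sub_rpow_neg_closedBall_le (μ := volume) hβ₀
    (by simpa using hβ) hρ (0 : ℂ) z
  simpa [Measure.real] using this

lemma norm_cauchyTransform_le (hρ : 0 < ρ) (hfρ : Function.support f ⊆ closedBall 0 ρ)
    (hM : ∀ w, ‖f w‖ ≤ M) (z : ℂ) : ‖cauchyTransform f z‖ ≤ 3 * ρ * M := by
  have hM₀ : 0 ≤ M := (norm_nonneg _).trans (hM 0)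
  rw [cauchyTransform_apply, ← setIntegral_eq_integral_of_forall_compl_eq_zero
    (s := closedBall 0 ρ) fun w hw ↦ by simp [Function.notMem_support.1 fun h ↦ hw (hfρ h)]]
  calc ‖∫ w in closedBall 0 ρ, cauchyKernel (z - w) • f w‖
      ≤ ∫ w in closedBall 0 ρ, Real.pi⁻¹ * M * ‖z - w‖ ^ (-1 : ℝ) := by
        refine norm_integral_le_of_norm_le
          ((integrableOn_norm_sub_rpow_neg_closedBall (by simp) 0 z).const_mul _)
          (.of_forall fun w ↦ ?_)
        rw [norm_smul, norm_cauchyKernel, mul_right_comm]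
        gcongr
        exact hM w
    _ ≤ Real.pi⁻¹ * M * ((2 / (2 - 1) + 1) * Real.pi * ρ ^ (2 - 1 : ℝ)) := by
        rw [integral_const_mul]
        gcongr
        exact setIntegral_norm_sub_rpow_neg_closedBall_le_complex zero_le_one one_lt_two hρ z
    _ = 3 * ρ * M := by
        norm_num
        field_simp

lemma norm_cauchyTransform_sub_le {α : ℝ} (hα : α ∈ Set.Ico (0 : ℝ) 1) (hρ : 0 < ρ)
    (hf : AEStronglyMeasurable f) (hfρ : Function.support f ⊆ closedBall 0 ρ)
    (hM : ∀ w, ‖f w‖ ≤ M) (z z' : ℂ) :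
    ‖cauchyTransform f z - cauchyTransform f z'‖ ≤
      2 * M * (2 / (1 - α) + 1) * ρ ^ (1 - α) * ‖z - z'‖ ^ α := by
  have hM₀ : 0 ≤ M := (norm_nonneg _).trans (hM 0)
  have hβ : 1 + α < 2 := by linarith [hα.2]
  have h_int (z : ℂ) : IntegrableOn (fun w ↦ ‖z - w‖ ^ (-(1 + α))) (closedBall 0 ρ) :=
    integrableOn_norm_sub_rpow_neg_closedBall (by simpa using hβ) 0 z
  have hfc : HasCompactSupport f := .of_support_subset_isCompact (isCompact_closedBall 0 ρ) hfρ
  have h_bound : ∀ᵐ w, ‖(cauchyKernel (z - w) - cauchyKernel (z' - w)) • f w‖ ≤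
      Real.pi⁻¹ * M * ‖z - z'‖ ^ α * (‖z - w‖ ^ (-(1 + α)) + ‖z' - w‖ ^ (-(1 + α))) := by
    filter_upwards [Measure.ae_ne volume z, Measure.ae_ne volume z'] with w hw hw'
    have h_kernel :=
      norm_cauchyKernel_sub_le (sub_ne_zero.2 hw.symm) (sub_ne_zero.2 hw'.symm) hα.1 hα.2.le
    rw [sub_sub_sub_cancel_right] at h_kernel
    rw [norm_smul]
    exact (mul_le_mul h_kernel (hM w) (norm_nonneg _) (by positivity)).trans_eq (by ring)
  rw [cauchyTransform_apply, cauchyTransform_apply,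
    ← integral_sub (integrable_cauchyKernel_smul hf hfc hM z)
      (integrable_cauchyKernel_smul hf hfc hM z'),
    ← setIntegral_eq_integral_of_forall_compl_eq_zero (s := closedBall 0 ρ) fun w hw ↦ by
      simp [Function.notMem_support.1 fun h ↦ hw (hfρ h)]]
  simp only [← sub_smul]
  calc ‖∫ w in closedBall 0 ρ, (cauchyKernel (z - w) - cauchyKernel (z' - w)) • f w‖
      ≤ ∫ w in closedBall 0 ρ, Real.pi⁻¹ * M * ‖z - z'‖ ^ α *
          (‖z - w‖ ^ (-(1 + α)) + ‖z' - w‖ ^ (-(1 + α))) :=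
        norm_integral_le_of_norm_le (((h_int z).add
          (h_int z')).const_mul _) (ae_restrict_of_ae h_bound)
    _ ≤ Real.pi⁻¹ * M * ‖z - z'‖ ^ α *
          ((2 / (2 - (1 + α)) + 1) * Real.pi * ρ ^ (2 - (1 + α)) +
            (2 / (2 - (1 + α)) + 1) * Real.pi * ρ ^ (2 - (1 + α))) := by
        have h := setIntegral_norm_sub_rpow_neg_closedBall_le_complex
          (by linarith [hα.1]) hβ hρ
        rw [integral_const_mul, integral_add (h_int z)
          (h_int z')]
        gcongr
        exacts [h z, h z']
    _ = _ := by
        rw [show 2 - (1 + α) = 1 - α by ring]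
        field_simp
        ring

end CauchyTransform

section Wirtinger

open ContinuousLinearMap (lsmul)
open scoped Convolution

variable {E : Type*} [NormedAddCommGroup E] [NormedSpace ℂ E]

/-- `∂` as a bounded `ℂ`-linear map on real differentials. -/
noncomputable def wirtingerCLM : (ℂ →L[ℝ] E) →L[ℂ] E where
  toFun L := (2 : ℂ)⁻¹ • (L 1 - Complex.I • L Complex.I)
  map_add' L L' := by simp only [add_apply]; module
  map_smul' c L := by simp only [smul_apply, RingHom.id_apply]; module
  cont := by fun_prop

/-- `∂̄` as a bounded `ℂ`-linear map on real differentials. -/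
noncomputable def wirtingerBarCLM : (ℂ →L[ℝ] E) →L[ℂ] E where
  toFun L := (2 : ℂ)⁻¹ • (L 1 + Complex.I • L Complex.I)
  map_add' L L' := by simp only [add_apply]; module
  map_smul' c L := by simp only [smul_apply, RingHom.id_apply]; module
  cont := by fun_prop

lemma wirtingerCLM_fderiv (u : ℂ → E) (z : ℂ) : wirtingerCLM (fderiv ℝ u z) = wDv u z := rfl

lemma wirtingerBarCLM_fderiv (u : ℂ → E) (z : ℂ) :
    wirtingerBarCLM (fderiv ℝ u z) = wDbarv u z := rfl

lemma conj_smul_two_smul_wirtingerBarCLM (L : ℂ →L[ℝ] E) (v : ℂ) :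
    (starRingEnd ℂ v) • (2 : ℂ) • wirtingerBarCLM L = L v + Complex.I • L (Complex.I * v) := by
  have h_real (w : ℂ) : L w = (w.re : ℂ) • L 1 + (w.im : ℂ) • L Complex.I := by
    conv_lhs => rw [← re_add_im w, ← mul_one (w.re : ℂ)]
    simp only [← Complex.real_smul, map_add, map_smul, Complex.coe_smul]
  rw [h_real v, h_real (Complex.I * v)]
  simp only [wirtingerBarCLM, ContinuousLinearMap.coe_mk', LinearMap.coe_mk, AddHom.coe_mk]
  have h_conj : starRingEnd ℂ v = v.re - v.im * Complex.I := by apply Complex.ext <;> simp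
  rw [h_conj, mul_re, mul_im, I_re, I_im]
  push_cast
  linear_combination (norm := module) (-(v.im : ℂ) * I_mul_I) • L Complex.I

lemma hasCompactSupport_wDbarv {f : ℂ → E} (hf : HasCompactSupport f) :
    HasCompactSupport (wDbarv f) :=
  (hf.fderiv ℝ).comp_left (g := wirtingerBarCLM) (map_zero _)

variable [FiniteDimensional ℂ E] {F : Type*} [NormedAddCommGroup F] [NormedSpace ℝ F]

lemma wDbarv_convolution_right_of_lipschitzWith {k : ℂ → F} {f : ℂ → E}
    (L : F →L[ℝ] E →L[ℝ] E) (hL : ∀ x (c : ℂ) v, L x (c • v) = c • L x v)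
    (hk : LocallyIntegrable k) {C : ℝ≥0} (hf : LipschitzWith C f) (hfc : HasCompactSupport f) :
    wDbarv (k ⋆[L, volume] f) = k ⋆[L, volume] wDbarv f := by
  have : FiniteDimensional ℝ E := .complexToReal E
  have h_exists : ConvolutionExists k (fderiv ℝ f) (L.precompR ℂ) volume :=
    convolutionExists_of_forall_norm_le _ hk (measurable_fderiv ℝ f).aestronglyMeasurable
      (hfc.fderiv ℝ) fun x ↦ norm_fderiv_le_of_lipschitz ℝ hf
  ext z
  rw [← wirtingerBarCLM_fderiv, fderiv_convolution_right_of_lipschitzWith L hk hf hfc]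
  exact map_convolution (wirtingerBarCLM.restrictScalars ℝ) (wirtingerBarCLM.restrictScalars ℝ)
    (fun x D ↦ by simp [wirtingerBarCLM, hL]) h_exists z

lemma fderiv_cauchyTransform {f : ℂ → E} {C : ℝ≥0} (hf : LipschitzWith C f)
    (hfc : HasCompactSupport f) :
    fderiv ℝ (cauchyTransform f) = cauchyTransform (fderiv ℝ f) :=
  have : FiniteDimensional ℝ E := .complexToReal E
  fderiv_convolution_right_of_lipschitzWith (lsmul ℝ ℂ) locallyIntegrable_cauchyKernel hf hfc

end Wirtinger

section CauchyPompeiu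

open ContinuousLinearMap (lsmul)
open Filter
open scoped Convolution Topology Real

section PolarIntegrals

variable {V E : Type*} [NormedAddCommGroup V] [NormedSpace ℝ V] [NormedAddCommGroup E]
  [NormedSpace ℝ E]

lemma integral_Ioi_fderiv_smul [CompleteSpace E] {f : V → E} (hf : ContDiff ℝ 1 f)
    (hfc : HasCompactSupport f) {v : V} (hv : v ≠ 0) :
    ∫ r in Set.Ioi (0 : ℝ), fderiv ℝ f (r • v) v = -f 0 := by
  have h_deriv (r : ℝ) : HasDerivAt (fun r : ℝ ↦ f (r • v)) (fderiv ℝ f (r • v) v) r := by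
    have := ((hf.differentiable one_ne_zero) (r • v)).hasFDerivAt.comp_hasDerivAt r
      ((hasDerivAt_id r).smul_const v)
    rwa [one_smul] at this
  have h_contDiff : ContDiff ℝ 1 fun r : ℝ ↦ f (r • v) :=
    hf.comp (contDiff_id.smul contDiff_const)
  have h_support : HasCompactSupport fun r : ℝ ↦ f (r • v) :=
    hfc.comp_isClosedEmbedding (isClosedEmbedding_smul_left hv)
  simpa only [fun r ↦ (h_deriv r).deriv, zero_smul] using
    h_support.integral_Ioi_deriv_eq h_contDiff 0

variable {f : ℂ → E}

lemma integral_fderiv_circle_eq_zero [CompleteSpace E] (hf : ContDiff ℝ 1 f) {r : ℝ}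
    (hr : r ≠ 0) :
    ∫ θ in -π..π, fderiv ℝ f (r • exp (θ * I)) (I * exp (θ * I)) = 0 := by
  have h_deriv (θ : ℝ) : HasDerivAt (fun θ : ℝ ↦ f (r • exp (θ * I)))
      (r • fderiv ℝ f (r • exp (θ * I)) (I * exp (θ * I))) θ := by
    have h_exp : HasDerivAt (fun θ : ℝ ↦ exp (θ * I)) (I * exp (θ * I)) θ := by
      simpa [mul_comm] using ((ofRealCLM.hasDerivAt (x := θ)).mul_const I).cexp
    rw [← map_smul]
    exact ((hf.differentiable one_ne_zero) _).hasFDerivAt.comp_hasDerivAt θ (h_exp.const_smul r)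
  have h_cont : Continuous fun θ : ℝ ↦
      r • fderiv ℝ f (r • exp (θ * I)) (I * exp (θ * I)) := by
    have := hf.continuous_fderiv one_ne_zero
    fun_prop
  have h_ftc := intervalIntegral.integral_eq_sub_of_hasDerivAt (a := -π) (b := π)
    (fun θ _ ↦ h_deriv θ) (h_cont.intervalIntegrable _ _)
  rw [intervalIntegral.integral_smul] at h_ftc
  simpa [hr, exp_neg] using h_ftc

lemma integrableOn_fderiv_polarCoord (hf : ContDiff ℝ 1 f) (hfc : HasCompactSupport f) (c : ℂ) :
    IntegrableOn (fun p : ℝ × ℝ ↦ fderiv ℝ f (p.1 • exp (p.2 * I)) (c * exp (p.2 * I)))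
      polarCoord.target := by
  obtain ⟨R, hR⟩ := (hfc.fderiv ℝ).isBounded.subset_closedBall 0
  have h_cont : Continuous fun p : ℝ × ℝ ↦
      fderiv ℝ f (p.1 • exp (p.2 * I)) (c * exp (p.2 * I)) := by
    have := hf.continuous_fderiv one_ne_zero
    fun_prop
  refine (h_cont.continuousOn.integrableOn_compact
    (isCompact_Icc.prod isCompact_Icc)).of_forall_sdiff_eq_zero
    (s := Set.Icc 0 R ×ˢ Set.Icc (-π) π) polarCoord.open_target.measurableSet ?_
  rintro ⟨r, θ⟩ ⟨⟨hr, hθ⟩, h_out⟩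
  have h_norm : ‖r • exp (θ * I)‖ = r := by
    rw [norm_smul, norm_exp_ofReal_mul_I, mul_one, Real.norm_of_nonneg (le_of_lt hr)]
  have h_far : r • exp (θ * I) ∉ tsupport (fderiv ℝ f) := fun h ↦ by
    have := mem_closedBall_zero_iff.1 (hR h)
    exact h_out ⟨⟨le_of_lt hr, h_norm ▸ this⟩, Set.Ioo_subset_Icc_self hθ⟩
  simp only [image_eq_zero_of_notMem_tsupport h_far, zero_apply]

lemma setIntegral_polarCoord_fderiv_radial [CompleteSpace E] (hf : ContDiff ℝ 1 f)
    (hfc : HasCompactSupport f) :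
    ∫ p in polarCoord.target, fderiv ℝ f (p.1 • exp (p.2 * I)) (exp (p.2 * I)) =
      (2 * π) • -f 0 := by
  have h_int := integrableOn_fderiv_polarCoord hf hfc 1
  simp only [one_mul] at h_int
  rw [polarCoord_target, Measure.volume_eq_prod] at h_int ⊢
  rw [← Measure.prod_restrict, integral_prod_symm _ (by rwa [Measure.prod_restrict])]
  simp only [fun θ : ℝ ↦ integral_Ioi_fderiv_smul hf hfc (exp_ne_zero (θ * I))]
  simp [Real.pi_pos.le, two_mul]

lemma setIntegral_polarCoord_fderiv_angular [CompleteSpace E] (hf : ContDiff ℝ 1 f)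
    (hfc : HasCompactSupport f) :
    ∫ p in polarCoord.target, fderiv ℝ f (p.1 • exp (p.2 * I)) (I * exp (p.2 * I)) = 0 := by
  have h_int := integrableOn_fderiv_polarCoord hf hfc I
  rw [polarCoord_target, Measure.volume_eq_prod] at h_int ⊢
  rw [setIntegral_prod _ h_int]
  refine setIntegral_eq_zero_of_forall_eq_zero fun r hr ↦ ?_
  rw [← integral_Ioc_eq_integral_Ioo,
    ← intervalIntegral.integral_of_le (by linarith [Real.pi_pos]),
    integral_fderiv_circle_eq_zero hf (ne_of_gt hr)]

end PolarIntegrals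

variable {E : Type*} [NormedAddCommGroup E] [NormedSpace ℂ E] {f : ℂ → E}

lemma smul_cauchyKernel_smul_wDbarv (f : ℂ → E) {r : ℝ} (hr : r ≠ 0) (θ : ℝ) :
    r • cauchyKernel (r • exp (θ * I)) • wDbarv f (r • exp (θ * I)) =
      (2 * π)⁻¹ • (fderiv ℝ f (r • exp (θ * I)) (exp (θ * I)) +
        I • fderiv ℝ f (r • exp (θ * I)) (I * exp (θ * I))) := by
  have h_conj : starRingEnd ℂ (exp (θ * I)) = (exp (θ * I))⁻¹ := by
    rw [← exp_conj, ← exp_neg]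
    simp
  rw [← conj_smul_two_smul_wirtingerBarCLM, wirtingerBarCLM_fderiv, h_conj]
  simp only [cauchyKernel, ← Complex.coe_smul, smul_smul]
  congr 1
  have : (r : ℂ) ≠ 0 := mod_cast hr
  push_cast [smul_eq_mul]
  field_simp

lemma wDbarv_comp_const_sub (f : ℂ → E) (z w : ℂ) :
    wDbarv (fun w ↦ f (z - w)) w = -wDbarv f (z - w) := by
  have h_fderiv : fderiv ℝ (fun w ↦ f (z - w)) w = -fderiv ℝ f (z - w) := by
    simpa [sub_eq_add_neg, fderiv_comp_add_left] using
      fderiv_comp_smul (f := fun w ↦ f (z + w)) (x := w) (-1 : ℝ)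
  rw [← wirtingerBarCLM_fderiv, h_fderiv, map_neg, wirtingerBarCLM_fderiv]

section CompleteSpace

variable [CompleteSpace E]

lemma integral_cauchyKernel_smul_wDbarv (hf : ContDiff ℝ 1 f) (hfc : HasCompactSupport f) :
    ∫ w, cauchyKernel w • wDbarv f w = -f 0 := by
  have h_int := integrableOn_fderiv_polarCoord hf hfc 1
  simp only [one_mul] at h_int
  have h_int' : IntegrableOn (fun p : ℝ × ℝ ↦
      I • fderiv ℝ f (p.1 • exp (p.2 * I)) (I * exp (p.2 * I))) polarCoord.target :=
    (integrableOn_fderiv_polarCoord hf hfc I).smul I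
  have h_symm (p : ℝ × ℝ) : Complex.polarCoord.symm p = p.1 • exp (p.2 * I) := by
    simp [exp_mul_I, mul_add]
  rw [← Complex.integral_comp_polarCoord_symm]
  simp only [h_symm]
  rw [setIntegral_congr_fun polarCoord.open_target.measurableSet fun p hp ↦
      smul_cauchyKernel_smul_wDbarv f (ne_of_gt hp.1) p.2,
    integral_smul, integral_add h_int h_int', integral_smul,
    setIntegral_polarCoord_fderiv_radial hf hfc, setIntegral_polarCoord_fderiv_angular hf hfc,
    smul_zero, add_zero, inv_smul_smul₀ (by positivity)]

lemma cauchyTransform_wDbarv_of_contDiff (hf : ContDiff ℝ 1 f) (hfc : HasCompactSupport f) :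
    cauchyTransform (wDbarv f) = f := by
  ext z
  have h := integral_cauchyKernel_smul_wDbarv (f := fun w ↦ f (z - w))
    (hf.comp (contDiff_const.sub contDiff_id)) (hfc.comp_homeomorph (Homeomorph.subLeft z))
  simp only [wDbarv_comp_const_sub, smul_neg, integral_neg, neg_inj, sub_zero] at h
  exact h

lemma tendsto_cauchyTransform_convolution_normed {ι : Type*} {l : Filter ι}
    [l.IsCountablyGenerated] {φ : ι → ContDiffBump (0 : ℂ)} {K M : ℝ}
    (hφ : Tendsto (fun i ↦ (φ i).rOut) l (𝓝 0)) (hφK : ∀ᶠ i in l, (φ i).rOut ≤ K * (φ i).rIn)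
    (hf : AEStronglyMeasurable f) (hfc : HasCompactSupport f) (hM : ∀ w, ‖f w‖ ≤ M) (z : ℂ) :
    Tendsto (fun i ↦ cauchyTransform ((φ i).normed volume ⋆[lsmul ℝ ℝ, volume] f) z) l
      (𝓝 (cauchyTransform f z)) := by
  obtain ⟨R, hR⟩ := hfc.isCompact.isBounded.subset_closedBall 0
  have hM₀ : 0 ≤ M := (norm_nonneg _).trans (hM 0)
  have hf_int : LocallyIntegrable f :=
    (memLp_top_of_bound hf M (.of_forall hM)).locallyIntegrable le_top
  set B := (closedBall (0 : ℂ) (1 + R)).indicator fun _ ↦ (M : ℂ)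
  have h_dom : Integrable fun w ↦ cauchyKernel (z - w) • B w :=
    integrable_cauchyKernel_smul
      ((measurable_const.indicator measurableSet_closedBall).aestronglyMeasurable)
      (.of_support_subset_isCompact (isCompact_closedBall _ _) Set.support_indicator_subset)
      (fun w ↦ norm_indicator_le_norm_self _ w) z
  simp only [cauchyTransform_apply]
  refine tendsto_integral_filter_of_dominated_convergence _ (.of_forall fun i ↦ ?_) ?_ h_dom.norm ?_
  · have h_cont : Continuous ((φ i).normed volume ⋆[lsmul ℝ ℝ, volume] f) :=
      (φ i).hasCompactSupport_normed.continuous_convolution_left _ (φ i).continuous_normed hf_int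
    exact (measurable_cauchyKernel.comp (measurable_id.const_sub z)).aestronglyMeasurable.smul
      h_cont.aestronglyMeasurable
  · filter_upwards [hφ.eventually_le_const one_pos] with i hi
    refine .of_forall fun w ↦ ?_
    rw [norm_smul, norm_smul]
    gcongr
    refine (norm_convolution_normed_le_indicator (φ i) hf
      ((subset_tsupport f).trans hR) hM w).trans ?_
    rw [norm_indicator_eq_indicator_norm, norm_real, Real.norm_of_nonneg hM₀]
    exact Set.indicator_le_indicator_of_subset (closedBall_subset_closedBall (by gcongr))
      (fun _ ↦ hM₀) w
  · filter_upwards [ContDiffBump.ae_convolution_tendsto_right_of_locallyIntegrable hφ hφK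
      hf_int] with w hw
    exact hw.const_smul _

end CompleteSpace

variable [FiniteDimensional ℂ E] {C : ℝ≥0}

-- Regularisation reduces the formula to `C¹` functions.
lemma cauchyTransform_wDbarv (hf : LipschitzWith C f) (hfc : HasCompactSupport f) :
    cauchyTransform (wDbarv f) = f := by
  have : FiniteDimensional ℝ E := .complexToReal E
  have : CompleteSpace E := FiniteDimensional.complete ℂ E
  let φ (n : ℕ) : ContDiffBump (0 : ℂ) :=
    ⟨1 / ((n : ℝ) + 1), 2 * (1 / ((n : ℝ) + 1)), by positivity,
      lt_two_mul_self (by positivity)⟩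
  have hφ : Tendsto (fun n ↦ (φ n).rOut) .atTop (𝓝 0) := by
    simpa only [φ, mul_zero] using (tendsto_one_div_add_atTop_nhds_zero_nat (𝕜 := ℝ)).const_mul 2
  have h_wDbarv (n : ℕ) : cauchyTransform ((φ n).normed volume ⋆[lsmul ℝ ℝ, volume] wDbarv f) =
      (φ n).normed volume ⋆[lsmul ℝ ℝ, volume] f := by
    rw [← wDbarv_convolution_right_of_lipschitzWith (lsmul ℝ ℝ) (fun x c v ↦ smul_comm x c v)
      (φ n).continuous_normed.locallyIntegrable hf hfc]
    exact cauchyTransform_wDbarv_of_contDiff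
      ((φ n).hasCompactSupport_normed.contDiff_convolution_left (lsmul ℝ ℝ) (φ n).contDiff_normed
        hf.continuous.locallyIntegrable)
      ((φ n).hasCompactSupport_normed.convolution (lsmul ℝ ℝ) hfc)
  ext z
  refine tendsto_nhds_unique ?_
    (ContDiffBump.convolution_tendsto_right_of_continuous (μ := volume) hφ hf.continuous z)
  simp only [← h_wDbarv]
  exact tendsto_cauchyTransform_convolution_normed hφ (.of_forall fun n ↦ le_rfl)
    (wirtingerBarCLM.continuous.comp_aestronglyMeasurable
      (measurable_fderiv ℝ f).aestronglyMeasurable) (hasCompactSupport_wDbarv hfc)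
    (fun w ↦ wirtingerBarCLM.le_opNorm_of_le (norm_fderiv_le_of_lipschitz ℝ hf)) z

theorem wDbarv_cauchyTransform (hf : LipschitzWith C f) (hfc : HasCompactSupport f) :
    wDbarv (cauchyTransform f) = f :=
  (wDbarv_convolution_right_of_lipschitzWith (lsmul ℝ ℂ) (fun x c v ↦ smul_comm x c v)
    locallyIntegrable_cauchyKernel hf hfc).trans (cauchyTransform_wDbarv hf hfc)

end CauchyPompeiu

section LipschitzBall

open scoped BoundedContinuousFunction

variable {X Y : Type*} [PseudoMetricSpace X] [MetricSpace Y]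

/-- The `L`-Lipschitz maps into the closed ball of radius `r` around `c`, the domain of the Picard
iteration. -/
def lipschitzBall (X : Type*) [PseudoMetricSpace X] (L : ℝ≥0) (c : Y) (r : ℝ) : Set (X → Y) :=
  {u | LipschitzWith L u ∧ ∀ x, u x ∈ closedBall c r}

variable {L : ℝ≥0} {c : Y} {r : ℝ}

lemma isClosed_lipschitzBall : IsClosed (lipschitzBall X L c r) := by
  have h_pi : IsClosed (Set.univ.pi fun _ : X ↦ closedBall c r) :=
    isClosed_set_pi fun _ _ ↦ isClosed_closedBall
  convert (isClosed_setOfPred_lipschitzWith (α := X) (β := Y) L).inter h_pi using 1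
  ext u
  simp [lipschitzBall]

lemma exists_isFixedPt_mem_lipschitzBall [CompleteSpace Y] {P : (X → Y) → X → Y}
    (hr : 0 ≤ r) (hP : Set.MapsTo P (lipschitzBall X L c r) (lipschitzBall X L c r))
    {k : ℝ≥0} (hk : k < 1)
    (h_dist : ∀ u ∈ lipschitzBall X L c r, ∀ v ∈ lipschitzBall X L c r, ∀ d,
      (∀ x, dist (u x) (v x) ≤ d) → ∀ x, dist (P u x) (P v x) ≤ k * d) :
    ∃ u ∈ lipschitzBall X L c r, Function.IsFixedPt P u := by
  let S : Set (X →ᵇ Y) := {u | ⇑u ∈ lipschitzBall X L c r}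
  have : CompleteSpace S :=
    (isClosed_lipschitzBall.preimage BoundedContinuousFunction.continuous_coe).completeSpace_coe
  have : Nonempty S := ⟨.const X c, LipschitzWith.const' c, fun _ ↦ mem_closedBall_self hr⟩
  let Φ (u : S) : S :=
    have hu := hP u.2
    ⟨⟨⟨P u.1, hu.1.continuous⟩, 2 * r, fun x y ↦
      (dist_triangle_right _ _ c).trans ((add_le_add (hu.2 x) (hu.2 y)).trans_eq (two_mul r).symm)⟩,
      hu⟩
  have hΦ : ContractingWith k Φ := ⟨hk, LipschitzWith.of_dist_le_mul fun u v ↦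
    (BoundedContinuousFunction.dist_le (by positivity)).2
      (h_dist _ u.2 _ v.2 _ BoundedContinuousFunction.dist_coe_le_dist)⟩
  exact ⟨_, (ContractingWith.fixedPoint Φ hΦ).2,
    congrArg (fun u : S ↦ ⇑u.1) hΦ.fixedPoint_isFixedPt⟩

end LipschitzBall

section Lipschitz

lemma lipschitzWith_smul_of_forall_norm_le {X E : Type*} [PseudoMetricSpace X]
    [NormedAddCommGroup E] [NormedSpace ℝ E] {χ : X → ℝ} {g : X → E} {Kχ Kg A : ℝ≥0}
    (hχ : LipschitzWith Kχ χ) (hχ₁ : ∀ x, ‖χ x‖ ≤ 1) (hg : LipschitzWith Kg g)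
    (hA : ∀ x ∈ Function.support χ, ‖g x‖ ≤ A) :
    LipschitzWith (Kχ * A + Kg) fun x ↦ χ x • g x := by
  have h_le {x y : X} (hx : x ∈ Function.support χ) :
      dist (χ x • g x) (χ y • g y) ≤ (Kχ * A + Kg) * dist x y := by
    calc dist (χ x • g x) (χ y • g y)
        = ‖(χ x - χ y) • g x + χ y • (g x - g y)‖ := by
          rw [dist_eq_norm]
          congr 1
          module
      _ ≤ (Kχ * dist x y) * A + 1 * (Kg * dist x y) := by
          refine (norm_add_le _ _).trans ?_
          rw [norm_smul, norm_smul, ← dist_eq_norm, ← dist_eq_norm]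
          gcongr
          exacts [hχ.dist_le_mul x y, hA x hx, hχ₁ y, hg.dist_le_mul x y]
      _ = (Kχ * A + Kg) * dist x y := by ring
  refine .of_dist_le_mul fun x y ↦ ?_
  push_cast
  by_cases hx : x ∈ Function.support χ
  · exact h_le hx
  by_cases hy : y ∈ Function.support χ
  · rw [dist_comm, dist_comm x]
    exact h_le hy
  · rw [Function.notMem_support.1 hx, Function.notMem_support.1 hy, zero_smul, zero_smul, dist_self]
    positivity

end Lipschitz

section LipschitzCauchyTransform

open ContinuousLinearMap (lsmul)

variable {E : Type*} [NormedAddCommGroup E] [NormedSpace ℂ E] {f g : ℂ → E} {ρ M : ℝ} {C : ℝ≥0}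

lemma cauchyTransform_sub (hf : Continuous f) (hfc : HasCompactSupport f) (hg : Continuous g)
    (hgc : HasCompactSupport g) :
    cauchyTransform (f - g) = cauchyTransform f - cauchyTransform g := by
  ext z
  have hf_int := hfc.convolutionExists_right (lsmul ℝ ℂ) locallyIntegrable_cauchyKernel hf z
  have hg_int := hgc.convolutionExists_right (lsmul ℝ ℂ) locallyIntegrable_cauchyKernel hg z
  simp only [cauchyTransform, Pi.sub_apply, convolution_def, map_sub]
  exact integral_sub hf_int hg_int

lemma exists_holderWith_cauchyTransform (hf : AEStronglyMeasurable f)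
    (hfc : HasCompactSupport f) (hM : ∀ w, ‖f w‖ ≤ M) {α : ℝ≥0} (hα : α < 1) :
    ∃ H, HolderWith H α (cauchyTransform f) := by
  obtain ⟨ρ, hρ, hfρ⟩ := hfc.isCompact.isBounded.subset_closedBall_lt 0 0
  refine ⟨(2 * M * (2 / (1 - α) + 1) * ρ ^ (1 - α : ℝ)).toNNReal, fun z z' ↦ ?_⟩
  rw [edist_nndist, edist_nndist, ← ENNReal.coe_rpow_of_nonneg _ α.coe_nonneg,
    ← ENNReal.coe_mul, ENNReal.coe_le_coe, ← NNReal.coe_le_coe]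
  push_cast
  rw [dist_eq_norm, dist_eq_norm]
  refine (norm_cauchyTransform_sub_le ⟨α.2, mod_cast hα⟩ hρ hf
    ((subset_tsupport f).trans hfρ) hM z z').trans ?_
  exact mul_le_mul_of_nonneg_right (Real.le_coe_toNNReal _) (by positivity)

variable [FiniteDimensional ℂ E] (hf : LipschitzWith C f) (hfc : HasCompactSupport f)

include hf hfc

lemma differentiable_cauchyTransform : Differentiable ℝ (cauchyTransform f) :=
  have : FiniteDimensional ℝ E := .complexToReal E
  fun z ↦ (hasFDerivAt_convolution_right_of_lipschitzWith (lsmul ℝ ℂ)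
    locallyIntegrable_cauchyKernel hf hfc z).differentiableAt

lemma exists_holderWith_fderiv_cauchyTransform {α : ℝ≥0} (hα : α < 1) :
    ∃ H, HolderWith H α (fderiv ℝ (cauchyTransform f)) := by
  have : CompleteSpace E := FiniteDimensional.complete ℂ E
  have : FiniteDimensional ℝ E := .complexToReal E
  rw [fderiv_cauchyTransform hf hfc]
  exact exists_holderWith_cauchyTransform (measurable_fderiv ℝ f).aestronglyMeasurable
    (hfc.fderiv ℝ) (fun _ ↦ norm_fderiv_le_of_lipschitz ℝ hf) hα

lemma contDiff_cauchyTransform : ContDiff ℝ 1 (cauchyTransform f) := by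
  obtain ⟨H, hH⟩ := exists_holderWith_fderiv_cauchyTransform hf hfc (one_half_lt_one (α := ℝ≥0))
  exact contDiff_one_iff_fderiv.2
    ⟨differentiable_cauchyTransform hf hfc, hH.continuous (by positivity)⟩

omit hfc in
lemma lipschitzWith_cauchyTransform (hρ : 0 < ρ) (hfρ : Function.support f ⊆ closedBall 0 ρ)
    {L : ℝ≥0} (hL : 3 * ρ * C ≤ L) : LipschitzWith L (cauchyTransform f) := by
  have hfc : HasCompactSupport f := .of_support_subset_isCompact (isCompact_closedBall 0 ρ) hfρ
  have hf'ρ : Function.support (fderiv ℝ f) ⊆ closedBall 0 ρ :=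
    (support_fderiv_subset ℝ).trans (closure_minimal hfρ isClosed_closedBall)
  refine lipschitzWith_of_nnnorm_fderiv_le (𝕜 := ℝ) (differentiable_cauchyTransform hf hfc)
    fun z ↦ NNReal.coe_le_coe.1 (hL.trans' ?_)
  rw [coe_nnnorm, fderiv_cauchyTransform hf hfc]
  exact norm_cauchyTransform_le hρ hf'ρ (fun _ ↦ norm_fderiv_le_of_lipschitz ℝ hf) z

end LipschitzCauchyTransform

section Picard

variable {E : Type*} [NormedAddCommGroup E] {χ : ContDiffBump (0 : ℂ)} {a : ℂ × E → E} {c : E}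
  {u v : ℂ → E} {K L Kχ : ℝ≥0}

lemma norm_contDiffBump_le_one {V : Type*} [NormedAddCommGroup V] [NormedSpace ℝ V]
    [HasContDiffBump V] {x₀ : V} (χ : ContDiffBump x₀) (x : V) : ‖χ x‖ ≤ 1 :=
  (Real.norm_of_nonneg χ.nonneg).trans_le χ.le_one

lemma norm_apply_le_of_mem_support (ha : LipschitzWith K a) (hχ : χ.rOut ≤ 1)
    (hu : ∀ w, u w ∈ closedBall c 1) {w : ℂ} (hw : w ∈ Function.support χ) :
    ‖a (w, u w)‖ ≤ (‖a (0, c)‖₊ + K : ℝ≥0) := by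
  have hw : dist w 0 ≤ 1 := by
    rw [χ.support_eq] at hw
    exact (mem_ball.1 hw).le.trans hχ
  have := ha.dist_le_mul_of_le (x := (w, u w)) (y := (0, c)) (max_le hw (hu w))
  push_cast
  linarith [norm_le_norm_add_norm_sub' (a (w, u w)) (a (0, c)),
    dist_eq_norm (a (w, u w)) (a (0, c))]

variable [NormedSpace ℂ E]

/-- The right-hand side `a (w, u w)` localised by the cutoff `χ`. -/
noncomputable def cutoffSource (χ : ContDiffBump (0 : ℂ)) (a : ℂ × E → E) (u : ℂ → E) (w : ℂ) :
    E :=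
  χ w • a (w, u w)

/-- The Picard operator of the problem `∂̄ u = a (z, u)`, `u 0 = c`, with source localised by
`χ`. -/
noncomputable def picardMap (χ : ContDiffBump (0 : ℂ)) (a : ℂ × E → E) (c : E) (u : ℂ → E)
    (z : ℂ) : E :=
  c + (cauchyTransform (cutoffSource χ a u) z - cauchyTransform (cutoffSource χ a u) 0)

lemma support_cutoffSource_subset :
    Function.support (cutoffSource χ a u) ⊆ closedBall 0 χ.rOut :=
  (Function.support_smul_subset_left χ _).trans (χ.support_eq.trans_subset ball_subset_closedBall)

lemma hasCompactSupport_cutoffSource : HasCompactSupport (cutoffSource χ a u) :=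
  .of_support_subset_isCompact (isCompact_closedBall 0 χ.rOut) support_cutoffSource_subset

section Bounds

variable (ha : LipschitzWith K a) (hχ : χ.rOut ≤ 1)

include ha

lemma norm_cutoffSource_sub_le {d : ℝ} (h : ∀ w, dist (u w) (v w) ≤ d) (w : ℂ) :
    ‖(cutoffSource χ a u - cutoffSource χ a v) w‖ ≤ K * d := by
  calc ‖(cutoffSource χ a u - cutoffSource χ a v) w‖
      = ‖χ w‖ * dist (a (w, u w)) (a (w, v w)) := by
        rw [Pi.sub_apply, cutoffSource, cutoffSource, ← smul_sub, norm_smul, dist_eq_norm]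
    _ ≤ 1 * (K * dist (w, u w) (w, v w)) := by
        gcongr
        exacts [norm_contDiffBump_le_one χ w, ha.dist_le_mul _ _]
    _ ≤ K * d := by
        rw [one_mul, Prod.dist_eq, dist_self, max_eq_right dist_nonneg]
        gcongr
        exact h w

include hχ

lemma norm_cutoffSource_le (hu : ∀ w, u w ∈ closedBall c 1) (w : ℂ) :
    ‖cutoffSource χ a u w‖ ≤ (‖a (0, c)‖₊ + K : ℝ≥0) := by
  by_cases hw : w ∈ Function.support χ
  · rw [cutoffSource, norm_smul]
    exact (mul_le_of_le_one_left (norm_nonneg _) (norm_contDiffBump_le_one χ w)).trans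
      (norm_apply_le_of_mem_support ha hχ hu hw)
  · rw [cutoffSource, Function.notMem_support.1 hw, zero_smul, norm_zero]
    positivity

lemma lipschitzWith_cutoffSource (hLχ : LipschitzWith Kχ χ) (hu : u ∈ lipschitzBall ℂ L c 1) :
    LipschitzWith (Kχ * (‖a (0, c)‖₊ + K) + K * max 1 L) (cutoffSource χ a u) :=
  lipschitzWith_smul_of_forall_norm_le hLχ (norm_contDiffBump_le_one χ)
    (ha.comp (LipschitzWith.id.prodMk hu.1))
    fun _ hw ↦ norm_apply_le_of_mem_support ha hχ hu.2 hw

-- The factor `12 = 2 * 2 * 3`: `picardMap` involves two values of `cauchyTransform`, each of which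
-- is at most `3 * χ.rOut` times the sup norm of the source, and should contract by `1 / 2`.
variable (hLχ : LipschitzWith Kχ χ) (hχa : 12 * χ.rOut * (‖a (0, c)‖₊ + K : ℝ≥0) ≤ 1)

include hχa hLχ

lemma dist_picardMap_le (hu : u ∈ lipschitzBall ℂ L c 1) (hv : v ∈ lipschitzBall ℂ L c 1) {d : ℝ}
    (h : ∀ w, dist (u w) (v w) ≤ d) (z : ℂ) :
    dist (picardMap χ a c u z) (picardMap χ a c v z) ≤ (1 / 2 : ℝ≥0) * d := by
  have h_sub := cauchyTransform_sub (lipschitzWith_cutoffSource ha hχ hLχ hu).continuous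
    hasCompactSupport_cutoffSource (lipschitzWith_cutoffSource ha hχ hLχ hv).continuous
    hasCompactSupport_cutoffSource
  have h_support : Function.support (cutoffSource χ a u - cutoffSource χ a v) ⊆
      closedBall 0 χ.rOut :=
    (Function.support_sub _ _).trans
      (Set.union_subset support_cutoffSource_subset support_cutoffSource_subset)
  have h_bound (z : ℂ) : ‖cauchyTransform (cutoffSource χ a u) z -
      cauchyTransform (cutoffSource χ a v) z‖ ≤ 3 * χ.rOut * (K * d) := by
    rw [← Pi.sub_apply, ← h_sub]
    exact norm_cauchyTransform_le χ.rOut_pos h_support (norm_cutoffSource_sub_le ha h) z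
  have hd : 0 ≤ d := dist_nonneg.trans (h 0)
  calc dist (picardMap χ a c u z) (picardMap χ a c v z)
      ≤ 3 * χ.rOut * (K * d) + 3 * χ.rOut * (K * d) := by
        rw [picardMap, picardMap, dist_add_left, dist_eq_norm, sub_sub_sub_comm]
        exact (norm_sub_le _ _).trans (add_le_add (h_bound z) (h_bound 0))
    _ ≤ (1 / 2 : ℝ≥0) * d := by
        push_cast at hχa ⊢
        nlinarith [mul_nonneg χ.rOut_pos.le (norm_nonneg (a (0, c)))]

lemma mapsTo_picardMap_lipschitzBall [FiniteDimensional ℂ E] :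
    Set.MapsTo (picardMap χ a c) (lipschitzBall ℂ (1 + Kχ) c 1)
      (lipschitzBall ℂ (1 + Kχ) c 1) := by
  intro u hu
  have h_max : max 1 (1 + Kχ) = 1 + Kχ := max_eq_right le_self_add
  have h_lip : LipschitzWith (1 + Kχ) (cauchyTransform (cutoffSource χ a u)) := by
    refine lipschitzWith_cauchyTransform (lipschitzWith_cutoffSource ha hχ hLχ hu) χ.rOut_pos
      support_cutoffSource_subset ?_
    rw [h_max]
    push_cast at hχa ⊢
    nlinarith [mul_nonneg χ.rOut_pos.le (norm_nonneg (a (0, c))), K.2, Kχ.2]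
  refine ⟨.of_dist_le_mul fun z z' ↦ ?_, fun z ↦ ?_⟩
  · simpa [picardMap] using h_lip.dist_le_mul z z'
  · have h_bound := norm_cauchyTransform_le χ.rOut_pos support_cutoffSource_subset
      (norm_cutoffSource_le ha hχ hu.2)
    rw [mem_closedBall, picardMap, dist_self_add_left]
    refine (norm_sub_le _ _).trans ?_
    linarith [h_bound z, h_bound 0]

end Bounds

end Picard

section LocalExistence

open scoped Topology

lemma HolV_lt_top_of_holderWith {E : Type*} [NormedAddCommGroup E] {H α : ℝ≥0} {f : ℂ → E}
    (hf : HolderWith H α f) (A : Set ℂ) : HolV α A f < ⊤ := by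
  refine lt_of_le_of_lt ?_ (ENNReal.coe_lt_top (r := H))
  refine iSup₂_le fun z _ ↦ iSup₂_le fun z' _ ↦ iSup_le fun _ ↦ ENNReal.div_le_of_le_mul ?_
  simpa only [edist_eq_enorm_sub, enorm_eq_nnnorm] using hf z z'

variable {E : Type*} [NormedAddCommGroup E] [NormedSpace ℂ E] {χ : ContDiffBump (0 : ℂ)}
  {a : ℂ × E → E} {c : E} {u : ℂ → E} {K Kχ : ℝ≥0}

lemma HolV_wDv_lt_top_of_holderWith_fderiv {H α : ℝ≥0} (hu : HolderWith H α (fderiv ℝ u))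
    (A : Set ℂ) : HolV α A (wDv u) < ⊤ := by
  simpa only [one_mul, Function.comp_def, wirtingerCLM_fderiv] using
    HolV_lt_top_of_holderWith (wirtingerCLM.lipschitz.holderWith.comp hu) A

lemma HolV_wDbarv_lt_top_of_holderWith_fderiv {H α : ℝ≥0} (hu : HolderWith H α (fderiv ℝ u))
    (A : Set ℂ) : HolV α A (wDbarv u) < ⊤ := by
  simpa only [one_mul, Function.comp_def, wirtingerBarCLM_fderiv] using
    HolV_lt_top_of_holderWith (wirtingerBarCLM.lipschitz.holderWith.comp hu) A

lemma fderiv_picardMap (χ : ContDiffBump (0 : ℂ)) (a : ℂ × E → E) (c : E) (u : ℂ → E) :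
    fderiv ℝ (picardMap χ a c u) = fderiv ℝ (cauchyTransform (cutoffSource χ a u)) := by
  ext1 z
  exact (fderiv_const_add c).trans (fderiv_sub_const _)

lemma picardMap_apply_zero (χ : ContDiffBump (0 : ℂ)) (a : ℂ × E → E) (c : E) (u : ℂ → E) :
    picardMap χ a c u 0 = c := by
  rw [picardMap, sub_self, add_zero]

lemma exists_contDiffBump_lipschitzWith {V : Type*} [NormedAddCommGroup V] [NormedSpace ℝ V]
    [FiniteDimensional ℝ V] (x₀ : V) {r : ℝ} (hr : 0 < r) :
    ∃ χ : ContDiffBump x₀, χ.rOut = r ∧ ∃ Kχ, LipschitzWith Kχ χ := by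
  let χ : ContDiffBump x₀ := ⟨r / 2, r, half_pos hr, half_lt_self hr⟩
  exact ⟨χ, rfl, χ.contDiff.lipschitzWith_of_hasCompactSupport χ.hasCompactSupport one_ne_zero⟩

variable [FiniteDimensional ℂ E]

lemma wDbarv_picardMap (h_source : LipschitzWith K (cutoffSource χ a u)) :
    wDbarv (picardMap χ a c u) = cutoffSource χ a u := by
  ext z
  rw [← wirtingerBarCLM_fderiv, fderiv_picardMap, wirtingerBarCLM_fderiv,
    wDbarv_cauchyTransform h_source hasCompactSupport_cutoffSource]

lemma exists_isFixedPt_picardMap (ha : LipschitzWith K a) (hχ : χ.rOut ≤ 1)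
    (hLχ : LipschitzWith Kχ χ) (hχa : 12 * χ.rOut * (‖a (0, c)‖₊ + K : ℝ≥0) ≤ 1) :
    ∃ u ∈ lipschitzBall ℂ (1 + Kχ) c 1, Function.IsFixedPt (picardMap χ a c) u :=
  have : CompleteSpace E := FiniteDimensional.complete ℂ E
  exists_isFixedPt_mem_lipschitzBall zero_le_one
    (mapsTo_picardMap_lipschitzBall ha hχ hLχ hχa) one_half_lt_one
    fun _ hu _ hv _ h ↦ dist_picardMap_le ha hχ hLχ hχa hu hv h

theorem exists_wDbarv_eq_of_lipschitzWith (ha : LipschitzWith K a) (c : E) :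
    ∃ u : ℂ → E, ContDiff ℝ 1 u ∧
      (∀ α : ℝ≥0, α < 1 → ∃ H, HolderWith H α (fderiv ℝ u)) ∧
      (∀ᶠ z in 𝓝 0, wDbarv u z = a (z, u z)) ∧ u 0 = c := by
  obtain ⟨χ, hχr, Kχ, hLχ⟩ := exists_contDiffBump_lipschitzWith (0 : ℂ)
    (r := (12 * (1 + (‖a (0, c)‖₊ + K : ℝ≥0)))⁻¹) (by positivity)
  have hχ : χ.rOut ≤ 1 := by
    rw [hχr]
    refine inv_le_one_of_one_le₀ ?_
    linarith [(‖a (0, c)‖₊ + K : ℝ≥0).coe_nonneg]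
  have hχa : 12 * χ.rOut * (‖a (0, c)‖₊ + K : ℝ≥0) ≤ 1 := by
    rw [hχr, mul_inv, mul_inv_cancel_left₀ (by norm_num), inv_mul_le_one₀ (by positivity)]
    exact le_add_of_nonneg_left zero_le_one
  obtain ⟨u, hu, h_fix⟩ := exists_isFixedPt_picardMap ha hχ hLχ hχa
  have h_source := lipschitzWith_cutoffSource ha hχ hLχ hu
  have h_compact : HasCompactSupport (cutoffSource χ a u) := hasCompactSupport_cutoffSource
  refine ⟨u, ?_, fun α hα ↦ ?_, ?_, ?_⟩
  · rw [← h_fix]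
    exact contDiff_const.add
      ((contDiff_cauchyTransform h_source h_compact).sub contDiff_const)
  · rw [← h_fix, fderiv_picardMap]
    exact exists_holderWith_fderiv_cauchyTransform h_source h_compact hα
  · filter_upwards [χ.eventuallyEq_one] with z hz
    have h_wDbarv := congrFun (wDbarv_picardMap (c := c) h_source) z
    rwa [h_fix, cutoffSource, hz, Pi.one_apply, one_smul] at h_wDbarv
  · rw [← h_fix, picardMap_apply_zero]

theorem local_existence_CR_first_order_general {α : ℝ} (hα : α ∈ Set.Ioo (0 : ℝ) 1)
    {s : Set (ℂ × E)} (hs : s ∈ 𝓝 (0, c)) (ha : LipschitzOnWith K a s) :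
    ∃ R : ℝ, 0 < R ∧ ∃ u : ℂ → E,
      (∃ U : Set ℂ, IsOpen U ∧ closedBall (0 : ℂ) R ⊆ U ∧ ContDiffOn ℝ 1 u U) ∧
      HolV α (closedBall (0 : ℂ) R) (wDv u) < ⊤ ∧
      HolV α (closedBall (0 : ℂ) R) (wDbarv u) < ⊤ ∧
      (∀ z ∈ closedBall (0 : ℂ) R, wDbarv u z = a (z, u z)) ∧
      u 0 = c := by
  have : FiniteDimensional ℝ E := .complexToReal E
  lift α to ℝ≥0 using hα.1.le
  obtain ⟨b, hb, hab⟩ := ha.extend_finite_dimension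
  obtain ⟨u, hu, h_holder, h_eq, rfl⟩ := exists_wDbarv_eq_of_lipschitzWith hb c
  obtain ⟨H, hH⟩ := h_holder α (mod_cast hα.2)
  have h_mem : ∀ᶠ z in 𝓝 0, (z, u z) ∈ s :=
    (continuous_id.prodMk hu.continuous).continuousAt.preimage_mem_nhds hs
  obtain ⟨R, hR, h_ball⟩ := nhds_basis_closedBall.eventually_iff.1 (h_eq.and h_mem)
  exact ⟨R, hR, u, ⟨Set.univ, isOpen_univ, Set.subset_univ _, hu.contDiffOn⟩,
    HolV_wDv_lt_top_of_holderWith_fderiv hH _, HolV_wDbarv_lt_top_of_holderWith_fderiv hH _,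
    fun z hz ↦ (h_ball hz).1.trans (hab (h_ball hz).2).symm, rfl⟩

end LocalExistence

/-- local existence for the first-order system `∂̄u(z) = a(z, u(z))`,
`u(0) = c`, the right-hand side `a` being `C^1` with first derivatives locally
`α`-Hölder. -/
theorem local_existence_CR_first_order (α : ℝ) (hα : α ∈ Set.Ioo (0:ℝ) 1)
    (n : ℕ) (hn : 1 ≤ n)
    (a : ℂ × (Fin n → ℂ) → Fin n → ℂ)
    (ha1 : ContDiff ℝ 1 a)
    (ha2 : ∀ s : Set (ℂ × (Fin n → ℂ)), Bornology.IsBounded s →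
      ∃ M : ℝ, ∀ p ∈ s, ∀ q ∈ s, ‖fderiv ℝ a p - fderiv ℝ a q‖ ≤ M * ‖p - q‖ ^ α)
    (c : Fin n → ℂ) :
    ∃ R : ℝ, 0 < R ∧ ∃ u : ℂ → Fin n → ℂ,
      (∃ U : Set ℂ, IsOpen U ∧ closedBall (0:ℂ) R ⊆ U ∧ ContDiffOn ℝ 1 u U) ∧
      HolV α (closedBall (0:ℂ) R) (wDv u) < ⊤ ∧
      HolV α (closedBall (0:ℂ) R) (wDbarv u) < ⊤ ∧
      (∀ z ∈ closedBall (0:ℂ) R, wDbarv u z = a (z, u z)) ∧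
      u 0 = c := by
  obtain ⟨K, s, hs, ha⟩ := (ha1.contDiffAt (x := (0, c))).exists_lipschitzOnWith
  exact local_existence_CR_first_order_general hα hs ha
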